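/- arXiv:2503.20660 — 2 statements merged into one kernel-verified Lean document; each statement's English description precedes it below -/
import Mathlib

section
/- Let n ≥ 1, let ‖·‖ be a norm on ℝⁿ with dual norm ‖g‖_* = sup{⟨g,v⟩ : ‖v‖ ≤ 1}, let g ∈ ℝⁿ, λ > 0, and p > 1. Then the infimum over v ∈ ℝⁿ of ⟨g,v⟩ + λ‖v‖^p equals (1−p)·‖g‖_*^{p/(p−1)} / (p^{p/(p−1)} · λ^{1/(p−1)}), and this value is attained (it is the least element of {⟨g,v⟩ + λ‖v‖^p : v ∈ ℝⁿ}). -/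
/-!
Since the unit ball of the norm is compact, the dual norm `D` of `g` is attained at some `v₀`, and
homogeneity gives `⟨g, v⟩ ≥ -D * N v`. This reduces the problem to minimizing `lam * t ^ p - D * t`
over `t ≥ 0`. Writing `D = p * lam * s ^ (p - 1)`, Young's inequality bounds this below by
`(1 - p) * lam * s ^ p`, with equality at `t = s`; the vector `-s • v₀` attains the bound.
-/

theorem exists_max_unitBall {E : Type*} [NormedAddCommGroup E] [NormedSpace ℝ E]
    [FiniteDimensional ℝ E] (f : E →ₗ[ℝ] ℝ) :
    ∃ v₀ : E, ‖v₀‖ ≤ 1 ∧ ∀ v : E, ‖v‖ ≤ 1 → f v ≤ f v₀ := by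
  have : ProperSpace E := FiniteDimensional.proper ℝ E
  obtain ⟨v₀, h₀, h⟩ := (isCompact_closedBall (0 : E) 1).exists_isMaxOn
    ⟨0, by simp⟩ f.continuous_of_finiteDimensional.continuousOn
  exact ⟨v₀, by simpa using h₀, fun v hv => h (by simpa using hv)⟩

/-- A linear functional attains its maximum on the unit ball of a norm given as a bare function,
obtained by installing `N` as the norm of `Fin n → ℝ` in place of the default sup norm. -/
theorem exists_max_of_norm {n : ℕ} (N : (Fin n → ℝ) → ℝ)
    (hN_eq : ∀ x, N x = 0 ↔ x = 0)
    (hN_smul : ∀ (a : ℝ) (x), N (a • x) = |a| * N x)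
    (hN_add : ∀ x y, N (x + y) ≤ N x + N y) (f : (Fin n → ℝ) →ₗ[ℝ] ℝ) :
    ∃ v₀, N v₀ ≤ 1 ∧ ∀ v, N v ≤ 1 → f v ≤ f v₀ := by
  let A : AddGroupNorm (Fin n → ℝ) :=
    { toFun := N
      map_zero' := (hN_eq 0).2 rfl
      add_le' := hN_add
      neg' := fun x => by simpa using hN_smul (-1) x
      eq_zero_of_map_eq_zero' := fun x => (hN_eq x).1 }
  let G : NormedAddCommGroup (Fin n → ℝ) := A.toNormedAddCommGroup
  let S : @NormedSpace ℝ (Fin n → ℝ) _ G.toSeminormedAddCommGroup :=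
    @NormedSpace.mk ℝ (Fin n → ℝ) _ G.toSeminormedAddCommGroup (Pi.module _ _ _)
      (fun a x => (hN_smul a x).le)
  exact @exists_max_unitBall (Fin n → ℝ) G S
    (inferInstanceAs (FiniteDimensional ℝ (Fin n → ℝ))) f

/-- The first-order condition `D = p * lam * s ^ (p - 1)` determines the minimizer `s` of
`lam * t ^ p - D * t`; the minimum is then `(1 - p) * lam * s ^ p`. -/
theorem exists_minimizer {D lam p : ℝ} (hD : 0 ≤ D) (hlam : 0 < lam) (hp : 1 < p) :
    ∃ s : ℝ, 0 ≤ s ∧ D = p * lam * s ^ (p - 1) ∧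
      (1 - p) * D ^ (p / (p - 1)) / (p ^ (p / (p - 1)) * lam ^ (1 / (p - 1)))
        = (1 - p) * lam * s ^ p := by
  have hp0 : 0 < p := by linarith
  have hp1 : p - 1 ≠ 0 := by linarith
  have hpl : 0 < p * lam := mul_pos hp0 hlam
  have hx : 0 ≤ D / (p * lam) := div_nonneg hD hpl.le
  refine ⟨(D / (p * lam)) ^ (1 / (p - 1)), by positivity, ?_, ?_⟩
  · rw [← Real.rpow_mul hx, one_div_mul_cancel hp1, Real.rpow_one]
    field_simp
  · rw [← Real.rpow_mul hx, one_div_mul_eq_div, Real.div_rpow hD hpl.le,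
      Real.mul_rpow hp0.le hlam.le]
    have h : lam ^ (p / (p - 1)) = lam * lam ^ (1 / (p - 1)) := by
      rw [show p / (p - 1) = 1 + 1 / (p - 1) by field_simp; ring, Real.rpow_add hlam,
        Real.rpow_one]
    rw [h]
    have h1 : 0 < p ^ (p / (p - 1)) := Real.rpow_pos_of_pos hp0 _
    have h2 : 0 < lam ^ (1 / (p - 1)) := Real.rpow_pos_of_pos hlam _
    field_simp

/-- Young's inequality for `t` and `s ^ (p - 1)`. -/
theorem mul_rpow_sub_one_le {p s t : ℝ} (hp : 1 < p) (hs : 0 ≤ s) (ht : 0 ≤ t) :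
    p * (t * s ^ (p - 1)) ≤ t ^ p + (p - 1) * s ^ p := by
  have hp0 : 0 < p := by linarith
  have hp1 : p - 1 ≠ 0 := by linarith
  have h := Real.young_inequality_of_nonneg ht (Real.rpow_nonneg hs (p - 1))
    (Real.HolderConjugate.conjExponent hp)
  rw [← Real.rpow_mul hs, Real.conjExponent, mul_div_cancel₀ _ hp1] at h
  calc p * (t * s ^ (p - 1)) ≤ p * (t ^ p / p + s ^ p / (p / (p - 1))) := by gcongr
    _ = t ^ p + (p - 1) * s ^ p := by field_simp


/-- For an arbitrary norm `N` on ℝⁿ with dual norm `dualN`,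
`λ > 0`, `p > 1`, the infimum over `v` of `⟨g,v⟩ + λ (N v)^p` is attained and
equals `(1−p)·(dualN g)^{p/(p−1)} / (p^{p/(p−1)} · λ^{1/(p−1)})`. -/
theorem stmt_3 (n : ℕ) (hn : 1 ≤ n)
    (N : (Fin n → ℝ) → ℝ)
    (hN_eq : ∀ x, N x = 0 ↔ x = 0)
    (hN_smul : ∀ (a : ℝ) (x), N (a • x) = |a| * N x)
    (hN_add : ∀ x y, N (x + y) ≤ N x + N y)
    (dualN : (Fin n → ℝ) → ℝ)
    (hdual : ∀ g, dualN g = sSup {r : ℝ | ∃ v, N v ≤ 1 ∧ r = ∑ i, g i * v i})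
    (g : Fin n → ℝ) (lam p : ℝ) (hlam : 0 < lam) (hp : 1 < p) :
    IsLeast {r : ℝ | ∃ v : Fin n → ℝ, r = ∑ i, g i * v i + lam * N v ^ p}
      ((1 - p) * dualN g ^ (p / (p - 1)) / (p ^ (p / (p - 1)) * lam ^ (1 / (p - 1)))) := by
  have hN0 : ∀ x, 0 ≤ N x := fun x => by
    have h1 := hN_add x (-x)
    have h2 : N (-x) = N x := by simpa using hN_smul (-1) x
    rw [add_neg_cancel, (hN_eq 0).2 rfl, h2] at h1
    linarith
  let f : (Fin n → ℝ) →ₗ[ℝ] ℝ :=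
    { toFun := fun v => ∑ i, g i * v i
      map_add' := fun x y => by simp [mul_add, Finset.sum_add_distrib]
      map_smul' := fun a x => by simp [Finset.mul_sum, mul_left_comm] }
  have hf : ∀ v, ∑ i, g i * v i = f v := fun _ => rfl
  obtain ⟨v₀, hv₀, hmax⟩ := exists_max_of_norm N hN_eq hN_smul hN_add f
  have hD : dualN g = f v₀ := by
    rw [hdual]
    refine IsGreatest.csSup_eq ⟨⟨v₀, hv₀, rfl⟩, ?_⟩
    rintro r ⟨v, hv, rfl⟩
    exact hmax v hv
  have hD0 : 0 ≤ f v₀ := by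
    simpa using hmax 0 (by rw [(hN_eq 0).2 rfl]; exact zero_le_one)
  have hlow : ∀ v, -(f v₀ * N v) ≤ f v := fun v => by
    rcases (hN0 v).eq_or_lt with h | h
    · rw [(hN_eq v).1 h.symm]; simp [(hN_eq 0).2 rfl]
    · have h1 := hmax ((-(N v)⁻¹) • v) (by
        rw [hN_smul, abs_neg, abs_of_pos (inv_pos.2 h), inv_mul_cancel₀ h.ne'])
      rw [map_smul, smul_eq_mul] at h1
      have h2 := mul_le_mul_of_nonneg_right h1 h.le
      have h3 : -(N v)⁻¹ * f v * N v = - f v := by field_simp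
      linarith
  obtain ⟨s, hs, hDs, hval⟩ := exists_minimizer hD0 hlam hp
  rw [hD, hval]
  have hlb : ∀ v, (1 - p) * lam * s ^ p ≤ f v + lam * N v ^ p := fun v => by
    have h1 := hlow v
    have h2 := mul_le_mul_of_nonneg_left (mul_rpow_sub_one_le hp hs (hN0 v)) hlam.le
    rw [hDs] at h1
    linarith
  constructor
  · refine ⟨(-s) • v₀, le_antisymm (hlb _) ?_⟩
    -- `N v₀ ≤ 1` suffices here (if `g = 0`, then `v₀` need not be a unit vector).
    have hNs : N ((-s) • v₀) ^ p ≤ s ^ p := by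
      rw [hN_smul, abs_neg, abs_of_nonneg hs]
      exact Real.rpow_le_rpow (mul_nonneg hs (hN0 _)) (mul_le_of_le_one_right hs hv₀)
        (by linarith)
    have h1 := mul_le_mul_of_nonneg_left hNs hlam.le
    have h2 : s * s ^ (p - 1) = s ^ p := by
      rw [← Real.rpow_one_add' hs (by linarith)]
      congr 1
      ring
    rw [hf, map_smul, smul_eq_mul, hDs]
    linear_combination h1 - p * lam * h2
  · rintro r ⟨v, rfl⟩
    exact hlb v
end

section
/- (Telescoped gradient formula, finite-state analogue of the gradient unrolling in Theorem 2.) Let S be a finite type, T ≥ 2, γ ∈ ℝ, ρ : Fin T → S → ℝ, θ₀ ∈ ℝ, and P : ℝ → Fin T → S → S → ℝ such that for every k, x, y the map θ ↦ P θ k x y is differentiable at θ₀ and P θ₀ k x y > 0. Define V θ k x by V θ (T−1) x = ρ (T−1) x and V θ k x = ρ k x + γ·Σ_{y} P θ k x y · V θ (k+1) y for k < T−1. Then for every initial state x₀ ∈ S, the derivative at θ₀ of θ ↦ V θ 0 x₀ equals Σ_{k=1}^{T−1} γ^k · Σ over all trajectories (x₁,…,x_k) ∈ S^k of [ ∏_{j=1}^{k}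 P θ₀ (j−1) x_{j−1} x_j ] · (derivative at θ₀ of θ ↦ Real.log (P θ (k−1) x_{k−1} x_k)) · V θ₀ k x_k. -/
/-!
Differentiating the Bellman recursion and using `∂P = P ∂(log P)` (valid since `P > 0`) gives
`∂V_k(x) = γ ∑_y P_k(x,y) (∂log P_k(x,y) V_{k+1}(y) + ∂V_{k+1}(y))`.
Iterating this `m` times from `x₀` yields the first `m` terms of the claimed sum plus the remainder
`γ^m ∑_τ (∏ P) ∂V_m(x_m)` over trajectories of length `m`: the step `m → m + 1` is the decomposition
of a trajectory of length `m + 1` into its initial part and its last state (`sum_traj_succ`).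
At `m = T - 1` the remainder vanishes, because the terminal value does not depend on `θ`.
-/

/-- The trajectory `x₀, x₁, …, x_k` determined by an initial state `x₀` and a
tuple `τ = (x₁, …, x_k) ∈ S^k`: `extTraj x₀ τ 0 = x₀` and
`extTraj x₀ τ j = x_j = τ (j-1)` for `1 ≤ j ≤ k` (junk value `x₀` beyond `k`). -/
def extTraj {S : Type*} {k : ℕ} (x₀ : S) (τ : Fin k → S) : ℕ → S :=
  fun j => if j = 0 then x₀ else if h : j - 1 < k then τ ⟨j - 1, h⟩ else x₀

theorem extTraj_snoc_of_le {S : Type*} {m : ℕ} (x₀ : S) (τ : Fin m → S) (y : S) {j : ℕ}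
    (hj : j ≤ m) :
    extTraj x₀ (Fin.snoc (α := fun _ => S) τ y) j = extTraj x₀ τ j := by
  unfold extTraj
  by_cases h0 : j = 0
  · simp [h0]
  · have h1 : j - 1 < m := by omega
    have h2 : j - 1 < m + 1 := by omega
    simp [h0, h1, h2, Fin.snoc]

theorem extTraj_snoc_last {S : Type*} {m : ℕ} (x₀ : S) (τ : Fin m → S) (y : S) :
    extTraj x₀ (Fin.snoc (α := fun _ => S) τ y) (m + 1) = y := by
  simp [extTraj, Fin.snoc]

/-- Marginalizing the last state of a trajectory: a path-weighted sum over trajectories of length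
`m + 1`, whose integrand depends on the last transition only, is the path-weighted sum over
trajectories of length `m` of the one-step weighted sum of that integrand. -/
theorem sum_traj_succ {S : Type*} [Fintype S] (Q : ℕ → S → S → ℝ) (x₀ : S) (m : ℕ)
    (g : S → S → ℝ) :
    ∑ τ : Fin (m + 1) → S,
        (∏ j ∈ Finset.range (m + 1), Q j (extTraj x₀ τ j) (extTraj x₀ τ (j + 1))) *
          g (extTraj x₀ τ m) (extTraj x₀ τ (m + 1)) =
      ∑ τ : Fin m → S,
        (∏ j ∈ Finset.range m, Q j (extTraj x₀ τ j) (extTraj x₀ τ (j + 1))) *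
          ∑ y, Q m (extTraj x₀ τ m) y * g (extTraj x₀ τ m) y := by
  rw [← (Fin.snocEquiv (fun _ : Fin (m + 1) => S)).sum_comp, Fintype.sum_prod_type_right]
  refine Finset.sum_congr rfl fun τ _ => ?_
  rw [Finset.mul_sum]
  refine Finset.sum_congr rfl fun y _ => ?_
  change (∏ j ∈ Finset.range (m + 1), Q j (extTraj x₀ (Fin.snoc (α := fun _ => S) τ y) j)
      (extTraj x₀ (Fin.snoc (α := fun _ => S) τ y) (j + 1))) *
    g (extTraj x₀ (Fin.snoc (α := fun _ => S) τ y) m)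
      (extTraj x₀ (Fin.snoc (α := fun _ => S) τ y) (m + 1)) = _
  rw [Finset.prod_range_succ, extTraj_snoc_last, extTraj_snoc_of_le x₀ τ y le_rfl, mul_assoc]
  congr 1
  refine Finset.prod_congr rfl fun j hj => ?_
  have hj' := Finset.mem_range.mp hj
  rw [extTraj_snoc_of_le x₀ τ y (by omega), extTraj_snoc_of_le x₀ τ y (by omega)]

/-- telescoped gradient formula, finite-state analogue of the
gradient unrolling in Theorem 2: with `S` finite, horizon `T ≥ 2`, discount
`γ`, rewards `ρ`, a kernel `P θ k x y` differentiable in `θ` at `θ₀` with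
`P θ₀ k x y > 0`, and `V` given by the backward recursion, for every initial
state `x₀` the derivative at `θ₀` of `θ ↦ V θ 0 x₀` equals
`Σ_{k=1}^{T−1} γ^k Σ_{(x₁,…,x_k)∈S^k} [∏_{j=1}^k P θ₀ (j−1) x_{j−1} x_j] ·
(d/dθ log P θ (k−1) x_{k−1} x_k)|_{θ₀} · V θ₀ k x_k`. -/
theorem stmt_15 (S : Type*) [Fintype S] (T : ℕ) (hT : 2 ≤ T) (γ : ℝ)
    (ρ : ℕ → S → ℝ) (θ₀ : ℝ) (P : ℝ → ℕ → S → S → ℝ)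
    (hPdiff : ∀ k, k < T → ∀ x y, DifferentiableAt ℝ (fun θ => P θ k x y) θ₀)
    (hPpos : ∀ k, k < T → ∀ x y, 0 < P θ₀ k x y)
    (V : ℝ → ℕ → S → ℝ)
    (hVlast : ∀ θ x, V θ (T - 1) x = ρ (T - 1) x)
    (hVrec : ∀ θ k, k + 1 < T → ∀ x,
      V θ k x = ρ k x + γ * ∑ y, P θ k x y * V θ (k + 1) y)
    (x₀ : S) :
    HasDerivAt (fun θ => V θ 0 x₀)
      (∑ k ∈ Finset.Icc 1 (T - 1), γ ^ k *
        ∑ τ : Fin k → S,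
          (∏ j ∈ Finset.range k,
              P θ₀ j (extTraj x₀ τ j) (extTraj x₀ τ (j + 1))) *
            deriv (fun θ =>
              Real.log (P θ (k - 1) (extTraj x₀ τ (k - 1)) (extTraj x₀ τ k))) θ₀ *
            V θ₀ k (extTraj x₀ τ k)) θ₀ := by
  have hdiff : ∀ n k, k + n = T - 1 → ∀ x, DifferentiableAt ℝ (fun θ => V θ k x) θ₀ := by
    intro n
    induction n with
    | zero =>
      intro k hk x
      obtain rfl : k = T - 1 := by omega
      simp only [hVlast]
      exact differentiableAt_const _
    | succ n ih =>
      intro k hk x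
      have hk1 : k + 1 < T := by omega
      simp only [fun θ => hVrec θ k hk1 x]
      exact (differentiableAt_const _).add ((DifferentiableAt.fun_sum fun y _ =>
        (hPdiff k (by omega) x y).mul (ih (k + 1) (by omega) y)).const_mul γ)
  have hstep : ∀ k, k + 1 < T → ∀ x, deriv (fun θ => V θ k x) θ₀ =
      γ * ∑ y, P θ₀ k x y * (deriv (fun θ => Real.log (P θ k x y)) θ₀ * V θ₀ (k + 1) y
        + deriv (fun θ => V θ (k + 1) y) θ₀) := by
    intro k hk x
    simp only [fun θ => hVrec θ k hk x]
    have h := ((HasDerivAt.fun_sum (u := Finset.univ) fun y _ =>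
      (hPdiff k (by omega) x y).hasDerivAt.mul
        (hdiff (T - 1 - (k + 1)) (k + 1) (by omega) y).hasDerivAt).const_mul γ).const_add (ρ k x)
    refine h.deriv.trans ?_
    congr 1
    refine Finset.sum_congr rfl fun y _ => ?_
    have hpos := (hPpos k (by omega) x y).ne'
    rw [deriv.log (hPdiff k (by omega) x y) hpos]
    field_simp
  have hunroll : ∀ m, m ≤ T - 1 → deriv (fun θ => V θ 0 x₀) θ₀ =
      (∑ k ∈ Finset.Icc 1 m, γ ^ k *
        ∑ τ : Fin k → S,
          (∏ j ∈ Finset.range k,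
              P θ₀ j (extTraj x₀ τ j) (extTraj x₀ τ (j + 1))) *
            deriv (fun θ =>
              Real.log (P θ (k - 1) (extTraj x₀ τ (k - 1)) (extTraj x₀ τ k))) θ₀ *
            V θ₀ k (extTraj x₀ τ k)) +
      γ ^ m * ∑ τ : Fin m → S,
        (∏ j ∈ Finset.range m, P θ₀ j (extTraj x₀ τ j) (extTraj x₀ τ (j + 1))) *
          deriv (fun θ => V θ m (extTraj x₀ τ m)) θ₀ := by
    intro m
    induction m with
    | zero => intro _; simp [extTraj]
    | succ m ih =>
      intro hm
      rw [ih (by omega), Finset.sum_Icc_succ_top (by omega), add_assoc]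
      congr 1
      simp only [Nat.add_sub_cancel]
      rw [← mul_add, ← Finset.sum_add_distrib]
      simp only [mul_assoc, ← mul_add]
      rw [sum_traj_succ (P θ₀) x₀ m fun x y =>
        deriv (fun θ => Real.log (P θ m x y)) θ₀ * V θ₀ (m + 1) y
          + deriv (fun θ => V θ (m + 1) y) θ₀]
      simp only [fun x => hstep m (by omega) x]
      rw [pow_succ, mul_assoc, Finset.mul_sum (a := γ)]
      congr 1
      exact Finset.sum_congr rfl fun τ _ => mul_left_comm _ _ _
  have h := hunroll (T - 1) le_rfl
  simp only [hVlast, deriv_const, mul_zero, Finset.sum_const_zero, add_zero] at h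
  rw [← h]
  exact (hdiff (T - 1) 0 (by omega) x₀).hasDerivAt
end
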